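/- arXiv:1409.3473 — 4 statements merged into one kernel-verified Lean document; each statement's English description precedes it below -/
import Mathlib

section
/- Let R be a reduced Noetherian commutative ring of prime characteristic p and I ⊆ R an ideal. Then the tight closure of I is contained in the integral closure of I: every x ∈ I^* is integral over I. -/
open IsLocalRing Filter Topology
open scoped TensorProduct

/-- The Frobenius bracket power `I^{[q]}`: the ideal generated by `q`-th powers of elements of `I`. -/
def Ideal.bracketPow {R : Type*} [CommRing R] (I : Ideal R) (q : ℕ) : Ideal R :=
  Ideal.span ((fun a => a ^ q) '' (I : Set R))

/-- `R°`: the set of elements of `R` not contained in any minimal prime ideal. -/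
def ringCirc (R : Type*) [CommRing R] : Set R :=
  {c | ∀ P ∈ minimalPrimes R, c ∉ P}

/-- The tight closure of an ideal `I` in a ring of characteristic `p`:
`x ∈ I^*` iff there is `c ∈ R°` with `c * x ^ (p ^ e) ∈ I^{[p^e]}` for all sufficiently
large `e`. -/
def tightClosure {R : Type*} [CommRing R] (p : ℕ) (I : Ideal R) : Set R :=
  {x | ∃ c ∈ ringCirc R, ∃ N : ℕ, ∀ e : ℕ, N ≤ e → c * x ^ p ^ e ∈ I.bracketPow (p ^ e)}

/-- `x` is integral over the ideal `J`: there are `n ≥ 1` and `aᵢ ∈ Jⁱ` with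
`x ^ n + a₁ x ^ (n-1) + ⋯ + aₙ = 0`. -/
def IsIntegralOverIdeal {R : Type*} [CommRing R] (J : Ideal R) (x : R) : Prop :=
  ∃ n : ℕ, 0 < n ∧ ∃ a : ℕ → R, (∀ i ∈ Finset.Icc 1 n, a i ∈ J ^ i) ∧
    x ^ n + ∑ i ∈ Finset.Icc 1 n, a i * x ^ (n - i) = 0

/-- `R` is F-finite: `F_*R` is a finitely generated `R`-module, i.e. there is a finite set
of generators `s` such that every element of `R` is an `R`-linear combination of elements of
`s` with respect to the Frobenius-twisted action `r • b = r ^ p * b`. -/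
def FFinite (R : Type*) [CommRing R] (p : ℕ) : Prop :=
  ∃ s : Finset R, ∀ x : R, ∃ a : R → R, x = ∑ b ∈ s, a b ^ p * b

/-- The map `cF^e : R → F^e_* R`, `x ↦ c * x ^ (p ^ e)`, splits as an `R`-module
homomorphism: there is an additive `φ : R → R` with `φ (r ^ (p ^ e) * x) = r * φ x`
for all `r, x` and `φ c = 1`. -/
def FrobSplitsWith {R : Type*} [CommRing R] (p : ℕ) (c : R) (e : ℕ) : Prop :=
  ∃ φ : R →+ R, (∀ r x : R, φ (r ^ p ^ e * x) = r * φ x) ∧ φ c = 1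

/-- `R` is strongly F-regular: F-finite, reduced, and for every `c ∈ R°` some `cF^e` splits. -/
def StronglyFRegular (R : Type*) [CommRing R] (p : ℕ) : Prop :=
  FFinite R p ∧ IsReduced R ∧ ∀ c ∈ ringCirc R, ∃ e : ℕ, FrobSplitsWith p c e

/-- `R` is F-pure: the Frobenius map `R → F_* R` splits as an `R`-module homomorphism. -/
def FPure (R : Type*) [CommRing R] (p : ℕ) : Prop :=
  ∃ φ : R →+ R, (∀ r x : R, φ (r ^ p * x) = r * φ x) ∧ φ 1 = 1

/-- A regular local ring: a Noetherian local ring whose maximal ideal can be generated by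
`dim R` elements. -/
def IsRegularLocal (R : Type*) [CommRing R] [IsLocalRing R] : Prop :=
  IsNoetherianRing R ∧ ∃ (d : ℕ) (x : Fin d → R),
    ringKrullDim R = d ∧ IsLocalRing.maximalIdeal R = Ideal.span (Set.range x)

/-- The height of an ideal: the infimum of the heights of the primes containing it. -/
noncomputable def idealHeight {R : Type*} [CommRing R] (I : Ideal R) : ℕ∞ :=
  ⨅ (P : PrimeSpectrum R) (_ : I ≤ P.asIdeal), Order.height P

/-- A parameter ideal: an ideal generated by `ht I` elements. -/
def IsParameterIdeal {R : Type*} [CommRing R] (I : Ideal R) : Prop :=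
  ∃ n : ℕ, idealHeight I = n ∧ ∃ x : Fin n → R, I = Ideal.span (Set.range x)

/-- A local ring is F-rational if every parameter ideal is tightly closed. -/
def FRationalLocal (R : Type*) [CommRing R] [IsLocalRing R] (p : ℕ) : Prop :=
  ∀ I : Ideal R, IsParameterIdeal I → tightClosure p I = ↑I

/-- A Cohen–Macaulay local ring: every full system of parameters `x₁, …, x_d`
(`d = dim B`) is a regular sequence, i.e. `(x₁, …, xᵢ) : xᵢ₊₁ = (x₁, …, xᵢ)`. -/
def IsCohenMacaulayLocalRing (B : Type*) [CommRing B] [IsLocalRing B] : Prop :=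
  ∀ d : ℕ, ringKrullDim B = d →
    ∀ x : Fin d → B, (∀ i, x i ∈ IsLocalRing.maximalIdeal B) →
      (Ideal.span (Set.range x)).radical = IsLocalRing.maximalIdeal B →
      ∀ i : Fin d,
        Submodule.colon (Ideal.span (x '' {j | (j : ℕ) < (i : ℕ)})) (Ideal.span {x i}) =
          Ideal.span (x '' {j | (j : ℕ) < (i : ℕ)})

/-- The length `ℓ_R M` of a module, as an extended natural number: the supremum of the
lengths of chains of submodules below `⊤`. -/
noncomputable def moduleLength (R M : Type*) [Ring R] [AddCommGroup M] [Module R M] : ℕ∞ :=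
  Order.height (⊤ : Submodule R M)

/-- The Frobenius endomorphism `x ↦ x ^ p`, as a ring homomorphism, in prime
characteristic `p`. -/
noncomputable def frobeniusRingHom (R : Type*) [CommRing R] (p : ℕ) [Fact p.Prime] [CharP R p] :
    R →+* R :=
  frobenius R p

/-!
Let `J = I + (z)` and let `A = R[Jt]` be its Rees algebra, with the ideal `𝔞 = (It)A`. If `c ∈ R°`
and `c zⁿ ∈ Iⁿ` for arbitrarily large `n`, then `c (zt)ⁿ ∈ 𝔞ⁿ` for those `n`. A prime `P ⊇ 𝔞` of `A`
with `zt ∉ P` would put `c` into every power of the maximal ideal of `A_P`, so `c` would vanish in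
`A_P` by Krull's intersection theorem. This is impossible because `c ∈ A°`, as one sees by testing
nilpotency in `A ⊆ R[t]` coefficientwise. Hence some power of `zt` lies in `𝔞`, which says
`zⁿ⁺¹ ∈ I Jⁿ` for some `n` and expands to an equation of integral dependence of `z` on `I`. For
`z ∈ I^*` the exponents `n = pᵉ` are enough, since `I^{[q]} ⊆ I^q`.
-/

open Polynomial

section RingCirc

variable {R S : Type*} [CommRing R] [CommRing S]

lemma mem_ringCirc_iff {c : R} :
    c ∈ ringCirc R ↔ ∀ y : R, IsNilpotent (c * y) → IsNilpotent y := by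
  have h : c ∉ ⋃ P ∈ minimalPrimes R, (P : Set R) ↔ _ :=
    not_congr (Set.ext_iff.1 Ideal.iUnion_minimalPrimes c)
  simpa [ringCirc, ← mem_nilradical, nilradical, not_imp_not] using h

lemma mem_ringCirc_of_map_injective {f : R →+* S} (hf : Function.Injective f) {c : R}
    (hc : f c ∈ ringCirc S) : c ∈ ringCirc R := by
  rw [mem_ringCirc_iff] at hc ⊢
  intro y hy
  exact (IsNilpotent.map_iff hf).1 (hc (f y) (map_mul f c y ▸ hy.map f))

lemma C_mem_ringCirc {c : R} (hc : c ∈ ringCirc R) : C c ∈ ringCirc R[X] := by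
  rw [mem_ringCirc_iff] at hc ⊢
  intro f hf
  simp only [Polynomial.isNilpotent_iff, coeff_C_mul] at hf ⊢
  exact fun i => hc _ (hf i)

lemma algebraMap_subalgebra_mem_ringCirc {c : R} (hc : c ∈ ringCirc R) (B : Subalgebra R R[X]) :
    algebraMap R B c ∈ ringCirc B :=
  mem_ringCirc_of_map_injective (f := B.val.toRingHom) Subtype.val_injective (C_mem_ringCirc hc)

lemma algebraMap_ne_zero_of_mem_ringCirc {c : R} (hc : c ∈ ringCirc R) (P : Ideal R) [P.IsPrime] :
    algebraMap R (Localization.AtPrime P) c ≠ 0 := by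
  intro h
  obtain ⟨s, hs⟩ := (IsLocalization.map_eq_zero_iff P.primeCompl _ c).1 h
  obtain ⟨n, hn⟩ := mem_ringCirc_iff.1 hc s ⟨1, by rw [pow_one, mul_comm, hs]⟩
  exact s.2 (Ideal.IsPrime.mem_of_pow_mem ‹_› n (hn ▸ P.zero_mem))

theorem mem_radical_of_frequently_mul_pow_mem [IsNoetherianRing R] {I : Ideal R} {c x : R}
    (hc : c ∈ ringCirc R) (h : ∃ᶠ n in atTop, c * x ^ n ∈ I ^ n) : x ∈ I.radical := by
  rw [Ideal.radical_eq_sInf, Ideal.mem_sInf]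
  rintro P ⟨hIP, _⟩
  by_contra hx
  let φ := algebraMap R (Localization.AtPrime P)
  have hI : I.map φ ≤ maximalIdeal (Localization.AtPrime P) := by
    rw [← Localization.AtPrime.map_eq_maximalIdeal]
    exact Ideal.map_mono hIP
  have hxu : IsUnit (φ x) := IsLocalization.map_units _ (⟨x, hx⟩ : P.primeCompl)
  have hcI : φ c ∈ ⨅ i, maximalIdeal (Localization.AtPrime P) ^ i := by
    rw [Ideal.mem_iInf]
    intro i
    obtain ⟨n, hin, hn⟩ := frequently_atTop.1 h i
    have hmem : φ c * φ x ^ n ∈ I.map φ ^ n := by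
      rw [← map_pow, ← map_mul, ← Ideal.map_pow]
      exact Ideal.mem_map_of_mem φ hn
    rw [Ideal.mul_unit_mem_iff_mem _ (hxu.pow n)] at hmem
    exact Ideal.pow_le_pow_right hin (Ideal.pow_right_mono hI n hmem)
  rw [Ideal.iInf_pow_eq_bot_of_isLocalRing _ (Ideal.IsPrime.ne_top inferInstance)] at hcI
  exact algebraMap_ne_zero_of_mem_ringCirc hc P hcI

end RingCirc

section Rees

variable {R : Type*} [CommRing R] {I J : Ideal R}

/-- The extension `(It) R[Jt]` to the Rees algebra of `J` of the degree-one piece `It`. It is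
meant for `I ≤ J`; in general it is generated by the elements `at` with `a ∈ I ⊓ J`. -/
noncomputable def reesExtension (I J : Ideal R) : Ideal (reesAlgebra J) :=
  Ideal.span {f | ∃ a ∈ I, (f : R[X]) = monomial 1 a}

lemma exists_mem_reesExtension_pow (hIJ : I ≤ J) {n : ℕ} {r : R} (hr : r ∈ I ^ n) :
    ∃ f ∈ reesExtension I J ^ n, (f : R[X]) = monomial n r := by
  induction hr using Submodule.pow_induction_on_left' with
  | algebraMap r => exact ⟨algebraMap R _ r, by simp, rfl⟩
  | add x y i _ _ ihx ihy =>
    obtain ⟨f, hf, hfx⟩ := ihx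
    obtain ⟨g, hg, hgy⟩ := ihy
    exact ⟨f + g, add_mem hf hg, by simp [hfx, hgy]⟩
  | mem_mul a ha i x _ ih =>
    obtain ⟨f, hf, hfx⟩ := ih
    let g : reesAlgebra J :=
      ⟨monomial 1 a, reesAlgebra.monomial_mem.2 (by simpa using hIJ ha)⟩
    have hg : g ∈ reesExtension I J := Ideal.subset_span ⟨a, ha, rfl⟩
    refine ⟨g * f, pow_succ' (reesExtension I J) i ▸ Ideal.mul_mem_mul hg hf, ?_⟩
    rw [MulMemClass.coe_mul, hfx, monomial_mul_monomial, add_comm]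

lemma coeff_succ_mem_of_mem_reesExtension {f : reesAlgebra J} (hf : f ∈ reesExtension I J)
    (n : ℕ) : (f : R[X]).coeff (n + 1) ∈ I * J ^ n := by
  induction hf using Submodule.closure_induction with
  | zero => simp
  | add f g _ _ hf hg => simpa using add_mem hf hg
  | smul_mem g f hf =>
    obtain ⟨a, ha, hfa⟩ := hf
    rw [smul_eq_mul, MulMemClass.coe_mul, hfa, coeff_mul_monomial, mul_comm _ a]
    exact Ideal.mul_mem_mul ha (g.2 n)

theorem exists_pow_succ_mem_mul_sup_span_pow [IsNoetherianRing R] {c z : R} (hc : c ∈ ringCirc R)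
    (h : ∃ᶠ n in atTop, c * z ^ n ∈ I ^ n) :
    ∃ n, z ^ (n + 1) ∈ I * (I ⊔ Ideal.span {z}) ^ n := by
  set J := I ⊔ Ideal.span {z}
  have hzJ : z ∈ J := Ideal.mem_sup_right (Ideal.mem_span_singleton_self z)
  let zt : reesAlgebra J := ⟨monomial 1 z, reesAlgebra.monomial_mem.2 (by simpa using hzJ)⟩
  have hzt : zt ∈ (reesExtension I J).radical := by
    refine mem_radical_of_frequently_mul_pow_mem
      (algebraMap_subalgebra_mem_ringCirc hc _) (h.mono ?_)
    intro n hn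
    obtain ⟨f, hf, hfn⟩ := exists_mem_reesExtension_pow (J := J) le_sup_left hn
    convert hf
    ext1
    simp [zt, hfn, monomial_pow, C_mul_monomial]
  obtain ⟨n, hn⟩ := hzt
  refine ⟨n, ?_⟩
  have hcoeff := coeff_succ_mem_of_mem_reesExtension (Ideal.mul_mem_left _ zt hn) n
  simpa [zt, monomial_pow, monomial_mul_monomial, add_comm 1, ← pow_succ'] using hcoeff

end Rees

section Integrality

variable {R : Type*} [CommRing R] {I : Ideal R} {z : R}

lemma mul_sup_span_singleton_pow_le (n : ℕ) :
    I * (I ⊔ Ideal.span {z}) ^ n ≤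
      ⨆ i ∈ Finset.range (n + 1), I ^ (i + 1) * Ideal.span {z ^ (n - i)} := by
  rw [← Submodule.add_eq_sup I, add_pow, Finset.mul_sum]
  refine Finset.sum_induction _ (· ≤ _) (fun _ _ => sup_le) bot_le fun i hi => ?_
  refine le_trans ?_ (le_iSup₂_of_le i hi le_rfl)
  rw [Ideal.span_singleton_pow, ← mul_assoc, ← mul_assoc, ← pow_succ']
  exact Ideal.mul_le_inf.trans inf_le_left

theorem isIntegralOverIdeal_of_pow_succ_mem {n : ℕ}
    (h : z ^ (n + 1) ∈ I * (I ⊔ Ideal.span {z}) ^ n) : IsIntegralOverIdeal I z := by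
  obtain ⟨y, hy⟩ := (Submodule.mem_iSup_finset_iff_exists_sum _ _).1
    (mul_sup_span_singleton_pow_le n h)
  choose a ha hay using fun i => Ideal.mem_mul_span_singleton.1 (y i).2
  refine ⟨n + 1, n.succ_pos, fun i => -a (i - 1), fun i hi => ?_, ?_⟩
  · have hi : i - 1 + 1 = i := Nat.sub_add_cancel (Finset.mem_Icc.1 hi).1
    exact neg_mem (hi ▸ ha (i - 1))
  · rw [← hy, ← Finset.Ico_add_one_right_eq_Icc, Finset.sum_Ico_eq_sum_range]
    simp [hay, add_comm 1]

theorem isIntegralOverIdeal_of_frequently_mul_pow_mem [IsNoetherianRing R] {c : R}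
    (hc : c ∈ ringCirc R) (h : ∃ᶠ n in atTop, c * z ^ n ∈ I ^ n) : IsIntegralOverIdeal I z :=
  let ⟨_, hn⟩ := exists_pow_succ_mem_mul_sup_span_pow hc h
  isIntegralOverIdeal_of_pow_succ_mem hn

end Integrality

lemma bracketPow_le_pow {R : Type*} [CommRing R] (I : Ideal R) (q : ℕ) :
    I.bracketPow q ≤ I ^ q := by
  rw [Ideal.bracketPow, Ideal.span_le]
  rintro _ ⟨a, ha, rfl⟩
  exact Ideal.pow_mem_pow ha q

theorem tightClosure_subset_integralClosure_general {R : Type*} [CommRing R] [IsNoetherianRing R]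
    {p : ℕ} (hp : 1 < p) {I : Ideal R} {z : R} (hz : z ∈ tightClosure p I) :
    IsIntegralOverIdeal I z := by
  obtain ⟨c, hc, N, hN⟩ := hz
  have hpow : ∀ᶠ e in atTop, c * z ^ p ^ e ∈ I ^ p ^ e :=
    eventually_atTop.2 ⟨N, fun e he => bracketPow_le_pow I _ (hN e he)⟩
  exact isIntegralOverIdeal_of_frequently_mul_pow_mem hc
    ((tendsto_pow_atTop_atTop_of_one_lt hp).frequently hpow.frequently)

/-- The tight closure of an ideal is contained in its integral closure. -/
theorem tightClosure_subset_integralClosure (R : Type*) [CommRing R] [IsNoetherianRing R]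
    [IsReduced R] (p : ℕ) [Fact p.Prime] [CharP R p]
    (I : Ideal R) (z : R) (hz : z ∈ tightClosure p I) :
    IsIntegralOverIdeal I z :=
  tightClosure_subset_integralClosure_general (Fact.out : p.Prime).one_lt hz
end

section
/- Let R be a reduced Noetherian commutative ring of prime characteristic p and let I ⊆ R be a principal ideal. Then the tight closure of I equals the integral closure of I: x ∈ I^* if and only if x is integral over I. -/
open IsLocalRing Filter Topology
open scoped TensorProduct

/-!
Both directions pass through a criterion for an arbitrary ideal `J` of a Noetherian ring: `x` is
integral over `J` if and only if some `c ∈ R°` satisfies `c * x ^ k ∈ J ^ k` for infinitely many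
`k`, equivalently for all large `k`. For principal `J` the bracket power `J^{[q]}` is the ordinary
power `J ^ q`, and the criterion becomes tight closure.

If `c * x ^ k ∈ J ^ k` for infinitely many `k`, then the elements `c x ^ k T ^ k` of the Noetherian
Rees algebra `R[JT]` satisfy a linear relation expressing one of them through earlier ones. Its
top-degree part says that `c` kills a monic expression `x ^ n - ∑ r_i x ^ (e_i)` with
`r_i ∈ J ^ (n - e_i)`. As `c ∈ R°`, this expression is nilpotent, and a power of it is an equation
of integral dependence.

Conversely, the `c` with `c * x ^ k ∈ J ^ k` for all large `k` form an ideal, so by prime avoidance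
it is enough to find one outside any given minimal prime `P`. If `J ⊈ P`, a power of `J` provides
it; if `J ⊆ P`, then `x ∈ P` is nilpotent in the localization at `P`, and some `c ∉ P` kills a power
of `x`.
-/

section MinimalPrimes

variable {R : Type*} [CommRing R]

lemma isNilpotent_of_mul_eq_zero_of_mem_ringCirc {c x : R} (hc : c ∈ ringCirc R)
    (h : c * x = 0) : IsNilpotent x := by
  have hx : x ∈ sInf (minimalPrimes R) := Ideal.mem_sInf.2 fun P hP =>
    (hP.isPrime.mem_or_mem (h ▸ P.zero_mem)).resolve_left (hc P hP)
  rwa [minimalPrimes, Ideal.sInf_minimalPrimes] at hx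

lemma exists_notMem_mul_pow_eq_zero_of_mem_minimalPrimes {P : Ideal R} (hP : P ∈ minimalPrimes R)
    {x : R} (hx : x ∈ P) : ∃ c ∉ P, ∃ n : ℕ, c * x ^ n = 0 := by
  have : P.IsPrime := hP.isPrime
  let A := Localization.AtPrime P
  have hrad : algebraMap R A x ∈ ((⊥ : Ideal R).map (algebraMap R A)).radical := by
    rw [IsLocalization.AtPrime.radical_map_of_mem_minimalPrimes A P ⊥ hP]
    exact Ideal.mem_map_of_mem _ hx
  obtain ⟨n, hn⟩ := hrad
  rw [Ideal.map_bot, Ideal.mem_bot, ← map_pow, IsLocalization.map_eq_zero_iff P.primeCompl] at hn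
  obtain ⟨c, hc⟩ := hn
  exact ⟨c, c.2, n, hc⟩

lemma exists_mem_ringCirc_of_not_le_minimalPrimes (hfin : (minimalPrimes R).Finite) {J : Ideal R}
    (hJ : ∀ P ∈ minimalPrimes R, ¬ J ≤ P) : ∃ c ∈ J, c ∈ ringCirc R := by
  have hcover : ¬ (J : Set R) ⊆ ⋃ P ∈ minimalPrimes R, (P : Set R) := by
    intro hsub
    obtain ⟨P, hP, hJP⟩ := (Ideal.subset_union_prime_finite hfin (f := id) ⊥ ⊥
      fun _ hP _ _ => hP.isPrime).1 hsub
    exact hJ P hP hJP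
  obtain ⟨c, hcJ, hc⟩ := Set.not_subset.1 hcover
  exact ⟨c, hcJ, fun P hP hcP => hc (Set.mem_biUnion hP hcP)⟩

end MinimalPrimes

lemma exists_eq_sum_smul_of_isNoetherian {A M : Type*} [Ring A] [AddCommGroup M] [Module A M]
    [IsNoetherian A M] (w : ℕ → M) : ∃ (n : ℕ) (s : Fin n → A), w n = ∑ i, s i • w i := by
  let f : ℕ →o Submodule A M :=
    ⟨fun n => Submodule.span A (w '' Set.Iio n), fun _ _ h =>
      Submodule.span_mono (Set.image_mono (Set.Iio_subset_Iio h))⟩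
  obtain ⟨n, hn⟩ := monotone_stabilizes_iff_noetherian.2 ‹IsNoetherian A M› f
  have hmem : w n ∈ Submodule.span A (w '' Set.Iio n) :=
    (hn (n + 1) n.le_succ).ge (Submodule.subset_span ⟨n, n.lt_succ_self, rfl⟩)
  rw [← Fin.range_val, ← Set.range_comp] at hmem
  obtain ⟨s, hs⟩ := (Submodule.mem_span_range_iff_exists_fun A).1 hmem
  exact ⟨n, s, hs.symm⟩

/-- The ideal of eventual multipliers of the powers of `x` into those of `J`: all `c` with
`c * x ^ k ∈ J ^ k` for all large `k`. Being an ideal, it meets `R°` by prime avoidance when `x` is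
integral over `J`. -/
def eventualMultipliers {R : Type*} [CommRing R] (J : Ideal R) (x : R) : Ideal R where
  carrier := {c | ∀ᶠ k in atTop, c * x ^ k ∈ J ^ k}
  zero_mem' := by simp
  add_mem' ha hb := by
    filter_upwards [ha, hb] with k hak hbk
    rw [add_mul]
    exact add_mem hak hbk
  smul_mem' r c hc := by
    filter_upwards [hc] with k hck
    rw [smul_eq_mul, mul_assoc]
    exact Ideal.mul_mem_left _ r hck

namespace IsIntegralOverIdeal

open Polynomial

variable {R : Type*} [CommRing R] {J : Ideal R} {x : R}

theorem of_subsingleton [Subsingleton R] : IsIntegralOverIdeal J x :=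
  ⟨1, one_pos, 0, fun _ _ => zero_mem _, Subsingleton.elim _ _⟩

theorem of_monic {f : R[X]} (hf : f.Monic) (hcoeff : ∀ i, f.coeff i ∈ J ^ (f.natDegree - i))
    (hx : f.eval x = 0) : IsIntegralOverIdeal J x := by
  rcases Nat.eq_zero_or_pos f.natDegree with hdeg | hdeg
  · rw [hf.natDegree_eq_zero.1 hdeg, eval_one] at hx
    have : Subsingleton R := subsingleton_of_zero_eq_one hx.symm
    exact of_subsingleton
  · refine ⟨f.natDegree, hdeg, fun i => f.coeff (f.natDegree - i), fun i hi => ?_, ?_⟩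
    · simpa [Nat.sub_sub_self (Finset.mem_Icc.1 hi).2] using hcoeff (f.natDegree - i)
    · rw [eval_eq_sum_range, ← Finset.sum_flip,
        Finset.sum_range_eq_add_Ico _ f.natDegree.succ_pos] at hx
      simpa [hf.coeff_natDegree, Finset.Ico_add_one_right_eq_Icc] using hx

theorem of_monic_of_isNilpotent {f : R[X]} (hf : f.Monic)
    (hcoeff : ∀ i, f.coeff i ∈ J ^ (f.natDegree - i)) (hx : IsNilpotent (f.eval x)) :
    IsIntegralOverIdeal J x := by
  obtain ⟨m, hm⟩ := hx
  refine of_monic (hf.pow m) (fun i => ?_) ((eval_pow m).trans hm)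
  simpa [hf.natDegree_pow] using
    coeff_prod_mem_ideal_pow_tsub (Finset.range m) (fun _ => f) J (fun _ => f.natDegree)
      (fun _ _ => hcoeff) i

theorem of_isNilpotent_pow_sub_sum {ι : Type*} [Fintype ι] {n : ℕ} {e : ι → ℕ} {r : ι → R}
    (he : ∀ i, e i < n) (hr : ∀ i, r i ∈ J ^ (n - e i))
    (hx : IsNilpotent (x ^ n - ∑ i, r i * x ^ e i)) : IsIntegralOverIdeal J x := by
  cases subsingleton_or_nontrivial R
  · exact of_subsingleton
  let g : R[X] := ∑ i, C (r i) * X ^ e i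
  have hg : g.degree < n := mem_degreeLT.1 <| Submodule.sum_mem _ fun i _ =>
    mem_degreeLT.2 <| (degree_C_mul_X_pow_le _ _).trans_lt (by exact_mod_cast he i)
  have hdeg : (X ^ n - g).natDegree = n := natDegree_eq_of_degree_eq_some <| by
    rw [degree_sub_eq_left_of_degree_lt (by rwa [degree_X_pow]), degree_X_pow]
  refine of_monic_of_isNilpotent (monic_X_pow_sub hg) (fun k => ?_) ?_
  · rw [hdeg, coeff_sub, coeff_X_pow, finsetSum_coeff]
    refine sub_mem ?_ (sum_mem fun i _ => ?_)
    · split_ifs with hk <;> simp [hk]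
    · rw [coeff_C_mul_X_pow]
      split_ifs with hk
      · exact hk ▸ hr i
      · exact zero_mem _
  · simpa [g, eval_finsetSum] using hx

theorem of_frequently_mul_pow_mem_pow [IsNoetherianRing R] {c : R} (hc : c ∈ ringCirc R)
    (h : ∃ᶠ k in atTop, c * x ^ k ∈ J ^ k) : IsIntegralOverIdeal J x := by
  obtain ⟨φ, hφ, hmem⟩ := extraction_of_frequently_atTop h
  let w (i : ℕ) : reesAlgebra J :=
    ⟨monomial (φ i) (c * x ^ φ i), reesAlgebra.monomial_mem.2 (hmem i)⟩
  obtain ⟨n, s, hs⟩ := exists_eq_sum_smul_of_isNoetherian (A := reesAlgebra J) w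
  let r (i : Fin n) : R := (s i : R[X]).coeff (φ n - φ i)
  have hlt (i : Fin n) : φ i < φ n := hφ i.2
  have htop : c * x ^ φ n = ∑ i, r i * (c * x ^ φ i) := by
    have hcoeff := congrArg (fun f : reesAlgebra J => (f : R[X]).coeff (φ n)) hs
    simp only [w, smul_eq_mul, AddSubmonoidClass.coe_finsetSum, Subalgebra.coe_mul,
      finsetSum_coeff, coeff_monomial_same] at hcoeff
    refine hcoeff.trans (Finset.sum_congr rfl fun i _ => ?_)
    conv_lhs => rw [← Nat.sub_add_cancel (hlt i).le, coeff_mul_monomial]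
  refine of_isNilpotent_pow_sub_sum hlt (fun i => (s i).2 _)
    (isNilpotent_of_mul_eq_zero_of_mem_ringCirc hc ?_)
  rw [mul_sub, htop, Finset.mul_sum, sub_eq_zero]
  exact Finset.sum_congr rfl fun i _ => by ring

theorem exists_pow_mem_pow_sub (hx : IsIntegralOverIdeal J x) :
    ∃ n, ∀ k, x ^ k ∈ J ^ (k - n) := by
  obtain ⟨n, -, a, ha, h⟩ := hx
  refine ⟨n, fun k => ?_⟩
  induction k using Nat.strong_induction_on with
  | _ k ih =>
    rcases le_or_gt k n with hk | hk
    · simp [Nat.sub_eq_zero_of_le hk]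
    · have hpow : x ^ k = -∑ i ∈ Finset.Icc 1 n, a i * x ^ (k - i) := by
        rw [← Nat.sub_add_cancel hk.le, pow_add, eq_neg_of_add_eq_zero_left h, mul_neg,
          Finset.mul_sum]
        refine congrArg _ (Finset.sum_congr rfl fun i hi => ?_)
        have hi' := Finset.mem_Icc.1 hi
        rw [mul_left_comm, ← pow_add]
        congr 2
        omega
      rw [hpow]
      refine neg_mem (sum_mem fun i hi => ?_)
      have hi' := Finset.mem_Icc.1 hi
      have hmul := Ideal.mul_mem_mul (ha i hi) (ih (k - i) (by omega))
      rw [← pow_add] at hmul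
      exact Ideal.pow_le_pow_right (by omega) hmul

theorem not_eventualMultipliers_le (hx : IsIntegralOverIdeal J x) {P : Ideal R}
    (hP : P ∈ minimalPrimes R) : ¬ eventualMultipliers J x ≤ P := by
  have := hP.isPrime
  obtain ⟨n, hn⟩ := hx.exists_pow_mem_pow_sub
  by_cases hJP : J ≤ P
  · have hxJ : x ^ (n + 1) ∈ J := by simpa using hn (n + 1)
    obtain ⟨c, hcP, m, hm⟩ :=
      exists_notMem_mul_pow_eq_zero_of_mem_minimalPrimes hP
        (this.mem_of_pow_mem (n + 1) (hJP hxJ))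
    refine fun hle => hcP (hle ?_)
    filter_upwards [eventually_ge_atTop m] with k hk
    have hck : c * x ^ k = 0 := by
      rw [← Nat.add_sub_cancel' hk, pow_add, ← mul_assoc, hm, zero_mul]
    exact hck ▸ zero_mem _
  · refine fun hle => hJP (this.le_of_pow_le (n := n) (le_trans (fun b hb => ?_) hle))
    refine Eventually.of_forall fun k => ?_
    have hmul := Ideal.mul_mem_mul hb (hn k)
    rw [← pow_add] at hmul
    exact Ideal.pow_le_pow_right (by omega) hmul

theorem exists_eventually_mul_pow_mem_pow (hfin : (minimalPrimes R).Finite)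
    (hx : IsIntegralOverIdeal J x) : ∃ c ∈ ringCirc R, ∀ᶠ k in atTop, c * x ^ k ∈ J ^ k := by
  obtain ⟨c, hcx, hc⟩ := exists_mem_ringCirc_of_not_le_minimalPrimes hfin
    fun _ hP => hx.not_eventualMultipliers_le hP
  exact ⟨c, hc, hcx⟩

end IsIntegralOverIdeal

section TightClosure

variable {R : Type*} [CommRing R]

lemma bracketPow_le_pow_s5 (J : Ideal R) (q : ℕ) : J.bracketPow q ≤ J ^ q :=
  Ideal.span_le.2 <| Set.image_subset_iff.2 fun _ hb => Ideal.pow_mem_pow hb q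

lemma bracketPow_span_singleton (a : R) (q : ℕ) :
    (Ideal.span {a}).bracketPow q = Ideal.span {a} ^ q := by
  refine le_antisymm (bracketPow_le_pow_s5 _ q) ?_
  rw [Ideal.span_singleton_pow, Ideal.span_singleton_le_iff_mem]
  exact Ideal.subset_span ⟨a, Ideal.mem_span_singleton_self a, rfl⟩

lemma isIntegralOverIdeal_of_mem_tightClosure [IsNoetherianRing R] {p : ℕ} (hp : 1 < p)
    {J : Ideal R} {x : R} (hx : x ∈ tightClosure p J) : IsIntegralOverIdeal J x := by
  obtain ⟨c, hc, N, h⟩ := hx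
  refine .of_frequently_mul_pow_mem_pow hc <|
    (tendsto_pow_atTop_atTop_of_one_lt hp).frequently (Eventually.frequently ?_)
  filter_upwards [eventually_ge_atTop N] with e he using bracketPow_le_pow_s5 J _ (h e he)

lemma IsIntegralOverIdeal.mem_tightClosure_span_singleton (hfin : (minimalPrimes R).Finite)
    {p : ℕ} (hp : 1 < p) {a x : R} (hx : IsIntegralOverIdeal (Ideal.span {a}) x) :
    x ∈ tightClosure p (Ideal.span {a}) := by
  obtain ⟨c, hc, hcx⟩ := hx.exists_eventually_mul_pow_mem_pow hfin
  obtain ⟨N, hN⟩ := eventually_atTop.1 ((tendsto_pow_atTop_atTop_of_one_lt hp).eventually hcx)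
  exact ⟨c, hc, N, fun e he => (bracketPow_span_singleton a _).symm ▸ hN e he⟩

end TightClosure

theorem tightClosure_principal_eq_integralClosure_general (R : Type*) [CommRing R]
    [IsNoetherianRing R] (p : ℕ) [Fact p.Prime] [CharP R p] (a : R) (z : R) :
    z ∈ tightClosure p (Ideal.span {a}) ↔ IsIntegralOverIdeal (Ideal.span {a}) z :=
  have hp : 1 < p := (Fact.out : p.Prime).one_lt
  ⟨isIntegralOverIdeal_of_mem_tightClosure hp, fun hz =>
    hz.mem_tightClosure_span_singleton (minimalPrimes.finite_of_isNoetherianRing R) hp⟩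

/-- For a principal ideal `I` in a reduced Noetherian ring of characteristic `p`,
the tight closure of `I` equals the integral closure of `I`. -/
theorem tightClosure_principal_eq_integralClosure (R : Type*) [CommRing R]
    [IsNoetherianRing R] [IsReduced R] (p : ℕ) [Fact p.Prime] [CharP R p]
    (a : R) (z : R) :
    z ∈ tightClosure p (Ideal.span {a}) ↔ IsIntegralOverIdeal (Ideal.span {a}) z :=
  tightClosure_principal_eq_integralClosure_general R p a z
end

section
/- Let R be an F-finite reduced Noetherian commutative ring of prime characteristic p. If R is strongly F-regular, then R is weakly F-regular: every ideal I ⊆ R is tightly closed, i.e., I^* = I. -/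
open IsLocalRing Filter Topology
open scoped TensorProduct

/-!
If `φ` splits `cF^e` and `c * x ^ p ^ e ∈ I^{[p^e]}`, then applying `φ` gives `x ∈ I`. A multiplier
`c` witnessing `x ∈ I^*` works for all large `e`, so it is enough to split `cF^e` for some large
`e`; once `R` is F-pure, the exponent of a splitting can be raised by composing with a splitting
of Frobenius.

A splitting of `cF^e` with `e > 0` yields one of Frobenius by precomposing with
`y ↦ c * y ^ p ^ (e - 1)`. The exponent `e = 0` is allowed in the definition of strong
F-regularity, and a splitting of `cF^0` only says that `c` is a unit. If this is all the hypothesis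
provides, then `R°` consists of units, so by prime avoidance every maximal ideal is a minimal
prime; the reduced Noetherian ring `R` is then semisimple, and the injection `R → F_*R` splits.
-/

section FrobeniusSplitting

variable {R : Type*} [CommRing R] {p e : ℕ} {c : R}

theorem FrobSplitsWith.isUnit (h : FrobSplitsWith p c 0) : IsUnit c := by
  obtain ⟨φ, hφ, hφc⟩ := h
  refine .of_mul_eq_one (φ 1) ?_
  simpa [hφc] using (hφ c 1).symm

theorem FrobSplitsWith.fPure [ExpChar R p] (h : FrobSplitsWith p c (e + 1)) : FPure R p := by
  obtain ⟨φ, hφ, hφc⟩ := h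
  refine ⟨φ.comp ((AddMonoidHom.mulLeft c).comp (iterateFrobenius R p e)), fun r x => ?_, ?_⟩
  · have hpow : c * (r ^ p * x) ^ p ^ e = r ^ p ^ (e + 1) * (c * x ^ p ^ e) := by ring
    simp [iterateFrobenius_def, hpow, hφ]
  · simp [hφc]

theorem FrobSplitsWith.succ (hR : FPure R p) (h : FrobSplitsWith p c e) :
    FrobSplitsWith p c (e + 1) := by
  obtain ⟨ψ, hψ, hψ1⟩ := hR
  obtain ⟨φ, hφ, hφc⟩ := h
  refine ⟨ψ.comp φ, fun r x => ?_, by simp [hφc, hψ1]⟩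
  have hpow : r ^ p ^ (e + 1) = (r ^ p) ^ p ^ e := by ring
  simp [hpow, hφ, hψ]

theorem FrobSplitsWith.mono (hR : FPure R p) {e' : ℕ} (hle : e ≤ e')
    (h : FrobSplitsWith p c e) : FrobSplitsWith p c e' := by
  induction e', hle using Nat.le_induction with
  | base => exact h
  | succ _ _ ih => exact ih.succ hR

theorem map_mem_of_mem_bracketPow {q : ℕ} {φ : R →+ R} (hφ : ∀ r x : R, φ (r ^ q * x) = r * φ x)
    {I : Ideal R} {y : R} (hy : y ∈ I.bracketPow q) : φ y ∈ I := by
  induction hy using Submodule.closure_induction with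
  | zero => simp
  | add _ _ _ _ hx hy => simpa using I.add_mem hx hy
  | smul_mem r _ ha =>
    obtain ⟨a, ha, rfl⟩ := ha
    simpa [mul_comm r, hφ] using I.mul_mem_right _ ha

theorem FrobSplitsWith.mem_of_mul_pow_mem_bracketPow (h : FrobSplitsWith p c e) {I : Ideal R}
    {x : R} (hx : c * x ^ p ^ e ∈ I.bracketPow (p ^ e)) : x ∈ I := by
  obtain ⟨φ, hφ, hφc⟩ := h
  simpa [mul_comm c, hφ, hφc] using map_mem_of_mem_bracketPow hφ hx

end FrobeniusSplitting

section SemisimpleRing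

theorem exists_addMonoidHom_retraction_of_injective {A B : Type*} [Ring A] [IsSemisimpleRing A]
    [Ring B] (f : A →+* B) (hf : Function.Injective f) :
    ∃ φ : B →+ A, (∀ a b, φ (f a * b) = a * φ b) ∧ φ 1 = 1 := by
  let : Module A B := f.toModule
  have hsmul (a : A) (b : B) : a • b = f a * b := rfl
  have hinj : Function.Injective (LinearMap.toSpanSingleton A B 1) := fun a a' h =>
    hf (by simpa [hsmul] using h)
  obtain ⟨φ, hφ⟩ := IsSemisimpleModule.extension_property _ hinj LinearMap.id
  refine ⟨φ.toAddMonoidHom, fun a b => ?_, ?_⟩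
  · simp [← hsmul]
  · simpa using LinearMap.congr_fun hφ 1

variable {R : Type*} [CommRing R]

theorem fPure_of_isSemisimpleRing [IsSemisimpleRing R] (p : ℕ) [ExpChar R p] : FPure R p :=
  exists_addMonoidHom_retraction_of_injective (frobenius R p) (frobenius_inj R p)

theorem exists_mem_ringCirc_of_forall_not_le (hfin : (minimalPrimes R).Finite) {I : Ideal R}
    (hI : ∀ P ∈ minimalPrimes R, ¬ I ≤ P) : ∃ c ∈ I, c ∈ ringCirc R := by
  have hcover : ¬ (I : Set R) ⊆ ⋃ P ∈ minimalPrimes R, (P : Set R) := by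
    rw [Ideal.subset_union_prime_finite hfin ⊥ ⊥ fun P hP _ _ => hP.isPrime]
    simpa using hI
  obtain ⟨c, hcI, hc⟩ := Set.not_subset.mp hcover
  exact ⟨c, hcI, by simpa [ringCirc] using hc⟩

theorem krullDimLE_zero_of_forall_ringCirc_isUnit (hfin : (minimalPrimes R).Finite)
    (h : ∀ c ∈ ringCirc R, IsUnit c) : Ring.KrullDimLE 0 R := by
  rw [Ring.krullDimLE_zero_iff]
  intro P hP
  obtain ⟨M, hM, hPM⟩ := P.exists_le_maximal hP.ne_top
  obtain ⟨Q, hQ, hMQ⟩ : ∃ Q ∈ minimalPrimes R, M ≤ Q := by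
    by_contra! hnot
    obtain ⟨c, hcM, hc⟩ := exists_mem_ringCirc_of_forall_not_le hfin hnot
    exact hM.ne_top (M.eq_top_of_isUnit_mem hcM (h c hc))
  have hQP : Q ≤ P := hQ.2 ⟨hP, bot_le⟩ (hPM.trans hMQ)
  rwa [le_antisymm hPM (hMQ.trans hQP)]

theorem isSemisimpleRing_of_forall_ringCirc_isUnit [IsNoetherianRing R] [IsReduced R]
    (h : ∀ c ∈ ringCirc R, IsUnit c) : IsSemisimpleRing R :=
  have : IsArtinianRing R := isArtinianRing_iff_krullDimLE_zero.mpr <|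
    krullDimLE_zero_of_forall_ringCirc_isUnit (minimalPrimes.finite_of_isNoetherianRing R) h
  IsArtinianRing.isSemisimpleRing_of_isReduced R

end SemisimpleRing

section TightClosure

variable {R : Type*} [CommRing R] {p : ℕ}

theorem fPure_of_forall_ringCirc_frobSplitsWith [IsNoetherianRing R] [IsReduced R] [ExpChar R p]
    (h : ∀ c ∈ ringCirc R, ∃ e : ℕ, FrobSplitsWith p c e) : FPure R p := by
  by_cases hpos : ∃ c ∈ ringCirc R, ∃ e, FrobSplitsWith p c (e + 1)
  · obtain ⟨c, -, e, hce⟩ := hpos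
    exact hce.fPure
  · push Not at hpos
    have hunit : ∀ c ∈ ringCirc R, IsUnit c := fun c hc => by
      obtain ⟨_ | e, hce⟩ := h c hc
      · exact hce.isUnit
      · exact absurd hce (hpos c hc e)
    have := isSemisimpleRing_of_forall_ringCirc_isUnit hunit
    exact fPure_of_isSemisimpleRing p

theorem one_mem_ringCirc : (1 : R) ∈ ringCirc R :=
  fun P hP => P.ne_top_iff_one.mp hP.isPrime.ne_top

theorem subset_tightClosure (I : Ideal R) : (I : Set R) ⊆ tightClosure p I := fun x hx =>
  ⟨1, one_mem_ringCirc, 0, fun e _ => (one_mul (x ^ p ^ e)).symm ▸ Ideal.subset_span ⟨x, hx, rfl⟩⟩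

end TightClosure

theorem strongly_F_regular_is_weakly_F_regular_general (R : Type*) [CommRing R]
    [IsNoetherianRing R] [IsReduced R] (p : ℕ) [Fact p.Prime] [CharP R p]
    (hSFR : ∀ c ∈ ringCirc R, ∃ e : ℕ, FrobSplitsWith p c e) (I : Ideal R) :
    tightClosure p I = (I : Set R) := by
  refine (subset_tightClosure I).antisymm' ?_
  rintro x ⟨c, hc, N, hN⟩
  obtain ⟨e, he⟩ := hSFR c hc
  have hPure : FPure R p := fPure_of_forall_ringCirc_frobSplitsWith hSFR
  have hsplit : FrobSplitsWith p c (max N e) := he.mono hPure (le_max_right N e)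
  exact hsplit.mem_of_mul_pow_mem_bracketPow (hN _ (le_max_left N e))

/-- A strongly F-regular ring is weakly F-regular: every ideal is tightly closed. -/
theorem strongly_F_regular_is_weakly_F_regular (R : Type*) [CommRing R]
    [IsNoetherianRing R] [IsReduced R]
    (p : ℕ) [Fact p.Prime] [CharP R p]
    (hFF : FFinite R p)
    (hSFR : ∀ c ∈ ringCirc R, ∃ e : ℕ, FrobSplitsWith p c e) :
    ∀ I : Ideal R, tightClosure p I = (I : Set R) :=
  strongly_F_regular_is_weakly_F_regular_general R p hSFR
end

section
/- (Fedder's criterion) Let (S, 𝔫) be an F-finite regular local ring of prime characteristic p, let I ⊆ S be a radical ideal, and set R = S/I. Then R is F-pure if and only if the colon ideal (I^{[p]} : I) is not contained in 𝔫^{[p]}. -/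
open IsLocalRing Filter Topology
open scoped TensorProduct

/-!
The proof is Fedder's. By Kunz's theorem `F_* S` is a finite free `S`-module: a regular system of
parameters of `S` acts on `F_* S` through its `p`-th powers, so it stays a regular sequence there.
The fibre `S ⧸ 𝔫^{[p]}` of `F_* S` has a simple essential socle, and therefore `Hom_S(F_* S, S)` is
generated, as an `F_* S`-module, by a single map `Φ`. Freeness turns membership in `I^{[p]}` into a
statement about all `S`-linear maps `F_* S → S`. So `x ↦ Φ (c * x)` descends to `S ⧸ I` iff
`c ∈ (I^{[p]} : I)`, and if `c ∉ 𝔫^{[p]}` some multiple of it takes a unit value at `1`.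
-/

section

open RingTheory.Sequence

universe u v

/-! ### Regular systems of parameters -/

lemma span_singleton_add_sup_of_mem {A : Type*} [CommRing A] {J : Ideal A} (x : A) {t : A}
    (ht : t ∈ J) : Ideal.span {x + t} ⊔ J = Ideal.span {x} ⊔ J := by
  have hle : ∀ x, ∀ t ∈ J, Ideal.span {x + t} ⊔ J ≤ Ideal.span {x} ⊔ J := fun x t ht =>
    sup_le ((Ideal.span_singleton_le_iff_mem _).2 (Submodule.add_mem_sup
      (Ideal.mem_span_singleton_self x) ht)) le_sup_right
  exact (hle x t ht).antisymm (by simpa using hle (x + t) (-t) (neg_mem ht))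

section LocalRing

variable {R : Type*} [CommRing R] [IsLocalRing R]

lemma isLocalRing_quotient_span_singleton {x : R} (hx : x ∈ maximalIdeal R) :
    IsLocalRing (R ⧸ Ideal.span {x}) := by
  have : Nontrivial (R ⧸ Ideal.span {x}) :=
    Ideal.Quotient.nontrivial_iff.2 fun h =>
      Ideal.IsPrime.ne_top' (top_le_iff.1 (h ▸ (Ideal.span_singleton_le_iff_mem _).2 hx))
  exact .of_surjective' _ Ideal.Quotient.mk_surjective

lemma mem_maximalIdeal_of_eq_ofList {l : List R} (h : maximalIdeal R = Ideal.ofList l) :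
    ∀ r ∈ l, r ∈ maximalIdeal R :=
  fun _ hr => h ▸ Ideal.subset_span hr

lemma maximalIdeal_quotient_eq_ofList {x : R} {l : List R} [IsLocalRing (R ⧸ Ideal.span {x})]
    (h : maximalIdeal R = Ideal.ofList (x :: l)) :
    maximalIdeal (R ⧸ Ideal.span {x}) = Ideal.ofList (l.map (Ideal.Quotient.mk _)) := by
  rw [← map_maximalIdeal_of_surjective _ Ideal.Quotient.mk_surjective, h, Ideal.ofList_cons,
    Ideal.map_sup, Ideal.map_quotient_self, bot_sup_eq, Ideal.map_ofList]

lemma exists_ofList_cons_eq_of_notMem_maximalIdeal_mul {l : List R} :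
    ∀ {x : R}, x ∈ Ideal.ofList l → x ∉ maximalIdeal R * Ideal.ofList l →
      ∃ l', l'.length + 1 = l.length ∧ Ideal.ofList (x :: l') = Ideal.ofList l := by
  induction l with
  | nil => simp
  | cons y l ih =>
    intro x hx hx'
    obtain ⟨a, t, ht, rfl⟩ := Ideal.mem_span_singleton_sup.1 (Ideal.ofList_cons y l ▸ hx)
    by_cases ha : IsUnit a
    · refine ⟨l, rfl, ?_⟩
      rw [Ideal.ofList_cons, Ideal.ofList_cons, span_singleton_add_sup_of_mem _ ht,
        Ideal.span_singleton_mul_left_unit ha]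
    · have ht' : t ∉ maximalIdeal R * Ideal.ofList l := fun ht' =>
        hx' (add_mem (Ideal.mul_mem_mul ((mem_maximalIdeal a).2 ha) (Ideal.subset_span (by simp)))
          (Ideal.mul_mono_right (by simp) ht'))
      obtain ⟨l', hl', h⟩ := ih ht ht'
      refine ⟨y :: l', by simpa using hl', ?_⟩
      rw [Ideal.ofList_cons y l, ← h, Ideal.ofList_cons, Ideal.ofList_cons, Ideal.ofList_cons,
        ← sup_assoc, add_comm,
        span_singleton_add_sup_of_mem _ (Ideal.mul_mem_left _ a (Ideal.mem_span_singleton_self y)),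
        sup_assoc, sup_left_comm]

lemma ringKrullDim_le_length_of_maximalIdeal_eq_ofList [IsNoetherianRing R] {l : List R}
    (h : maximalIdeal R = Ideal.ofList l) : ringKrullDim R ≤ l.length := by
  classical
  refine (ringKrullDim_le_spanFinrank_maximalIdeal R).trans ?_
  have hl : {r | r ∈ l} = (l.toFinset : Set R) := by ext; simp
  have hcard := Submodule.spanFinrank_span_le_ncard_of_finite (R := R) l.toFinset.finite_toSet
  rw [h, Ideal.ofList, hl]
  rw [Set.ncard_coe_finset] at hcard
  exact_mod_cast hcard.trans l.toFinset_card_le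

lemma exists_mem_maximalIdeal_notMem_sq_notMem_minimalPrimes [IsNoetherianRing R]
    (h : maximalIdeal R ∉ minimalPrimes R) :
    ∃ x ∈ maximalIdeal R, x ∉ maximalIdeal R ^ 2 ∧ ∀ P ∈ minimalPrimes R, x ∉ P := by
  have not_le_minimal : ∀ P ∈ minimalPrimes R, ¬ maximalIdeal R ≤ P := fun P hP hle =>
    h (le_antisymm hle (le_maximalIdeal hP.1.1.ne_top) ▸ hP)
  have not_le_sq : ¬ maximalIdeal R ≤ maximalIdeal R ^ 2 := fun hle => by
    have hbot : maximalIdeal R = ⊥ :=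
      Submodule.eq_bot_of_le_smul_of_le_jacobson_bot (maximalIdeal R) _ (IsNoetherian.noetherian _)
        (by rwa [smul_eq_mul, ← pow_two]) (maximalIdeal_le_jacobson _)
    obtain ⟨P, hP, -⟩ := Ideal.exists_minimalPrimes_le (bot_le : (⊥ : Ideal R) ≤ maximalIdeal R)
    exact not_le_minimal P hP (hbot ▸ bot_le)
  by_contra! hcon
  obtain ⟨P, rfl | hP, hle⟩ := (Ideal.subset_union_prime_finite
    ((minimalPrimes.finite_of_isNoetherianRing R).insert (maximalIdeal R ^ 2)) (f := id)
    (maximalIdeal R ^ 2) (maximalIdeal R ^ 2)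
    (fun P hP hne _ => (hP.resolve_left hne).1.1)).1 fun x hx => by
      by_cases hx2 : x ∈ maximalIdeal R ^ 2
      · exact Set.mem_biUnion (Set.mem_insert _ _) hx2
      · obtain ⟨P, hP, hxP⟩ := hcon x hx hx2
        exact Set.mem_biUnion (Set.mem_insert_of_mem _ hP) hxP
  · exact not_le_sq hle
  · exact not_le_minimal P hP hle

lemma isDomain_of_isPrime_span_singleton [IsNoetherianRing R] {x : R} (hx : x ∈ maximalIdeal R)
    (hprime : (Ideal.span {x}).IsPrime) (hmin : ∀ P ∈ minimalPrimes R, x ∉ P) : IsDomain R := by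
  obtain ⟨P, hP, hPx⟩ := Ideal.exists_minimalPrimes_le (bot_le : (⊥ : Ideal R) ≤ Ideal.span {x})
  have : P.IsPrime := hP.1.1
  have P_le_mul : P ≤ maximalIdeal R * P := fun y hy => by
    obtain ⟨z, rfl⟩ := Ideal.mem_span_singleton'.1 (hPx hy)
    rw [mul_comm z]
    exact Ideal.mul_mem_mul hx ((this.mem_or_mem hy).resolve_right (hmin P hP))
  have P_eq_bot : P = ⊥ := Submodule.eq_bot_of_le_smul_of_le_jacobson_bot (maximalIdeal R) _
    (IsNoetherian.noetherian _) P_le_mul (maximalIdeal_le_jacobson _)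
  subst P_eq_bot
  exact IsDomain.of_bot_isPrime R

/-- A regular system of parameters of a Noetherian local ring: a list generating the maximal ideal,
no longer than the dimension. The reverse inequality is Krull's height theorem. -/
def IsRegularSystemOfParameters (l : List R) : Prop :=
  maximalIdeal R = Ideal.ofList l ∧ (l.length : WithBot ℕ∞) ≤ ringKrullDim R

lemma IsRegularLocal.exists_isRegularSystemOfParameters (h : IsRegularLocal R) :
    ∃ l : List R, IsRegularSystemOfParameters l := by
  obtain ⟨-, d, x, hdim, hmax⟩ := h
  refine ⟨List.ofFn x, ?_, by simp [hdim]⟩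
  rw [hmax, Ideal.ofList]
  congr 1
  ext y
  simp [List.mem_ofFn]

lemma IsRegularSystemOfParameters.maximalIdeal_notMem_minimalPrimes {l : List R}
    (h : IsRegularSystemOfParameters l) (hl : l ≠ []) : maximalIdeal R ∉ minimalPrimes R := by
  intro hmin
  have hdim := h.2
  rw [← maximalIdeal_height_eq_ringKrullDim, Ideal.height_eq_zero_iff.2 hmin] at hdim
  exact hl (List.eq_nil_of_length_eq_zero (Nat.le_zero.1 (by exact_mod_cast hdim)))

variable [IsNoetherianRing R]

lemma IsRegularSystemOfParameters.quotient {x : R} {l : List R}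
    [IsLocalRing (R ⧸ Ideal.span {x})] (h : IsRegularSystemOfParameters (x :: l)) :
    IsRegularSystemOfParameters (l.map (Ideal.Quotient.mk (Ideal.span {x}))) := by
  refine ⟨maximalIdeal_quotient_eq_ofList h.1, ?_⟩
  have hx := mem_maximalIdeal_of_eq_ofList h.1 x List.mem_cons_self
  have hdim := h.2.trans (maximalIdeal_height_eq_ringKrullDim (R := R) ▸
    Ideal.height_le_ringKrullDim_quotient_add_one hx)
  rw [List.length_cons, Nat.cast_add, Nat.cast_one] at hdim
  rw [List.length_map]
  exact (WithBot.add_le_add_iff_right' (c := 1) (by decide) (by decide)).1 hdim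

lemma IsRegularSystemOfParameters.head_ne_zero {x : R} {l : List R}
    (h : IsRegularSystemOfParameters (x :: l)) : x ≠ 0 := by
  rintro rfl
  have hmax : maximalIdeal R = Ideal.ofList l := by rw [h.1]; simp
  have hle := h.2.trans (ringKrullDim_le_length_of_maximalIdeal_eq_ofList hmax)
  rw [List.length_cons, Nat.cast_le] at hle
  omega

end LocalRing

theorem IsRegularSystemOfParameters.isDomain {R : Type u} [CommRing R] [IsLocalRing R]
    [IsNoetherianRing R] {l : List R} (h : IsRegularSystemOfParameters l) : IsDomain R := by
  by_cases hl : l = []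
  · subst hl
    exact (isField_iff_maximalIdeal_eq.2 (by simpa using h.1)).isDomain
  obtain ⟨x, hx, hx2, hxP⟩ := exists_mem_maximalIdeal_notMem_sq_notMem_minimalPrimes
    (h.maximalIdeal_notMem_minimalPrimes hl)
  obtain ⟨l', hlen, hspan⟩ := exists_ofList_cons_eq_of_notMem_maximalIdeal_mul
    (h.1 ▸ hx) (by rwa [← h.1, ← pow_two])
  have h' : IsRegularSystemOfParameters (x :: l') := ⟨h.1.trans hspan.symm, by
    simpa only [List.length_cons, hlen] using h.2⟩
  have := isLocalRing_quotient_span_singleton hx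
  have := h'.quotient.isDomain
  exact isDomain_of_isPrime_span_singleton hx ((Ideal.Quotient.isDomain_iff_prime _).1 this) hxP
termination_by l.length
decreasing_by simp [← hlen]

theorem IsRegularSystemOfParameters.isWeaklyRegular {R : Type u} [CommRing R] [IsLocalRing R]
    [IsNoetherianRing R] :
    ∀ {l : List R}, IsRegularSystemOfParameters l → IsWeaklyRegular R l
  | [], _ => .nil R R
  | x :: l, h => by
    have := h.isDomain
    have := isLocalRing_quotient_span_singleton
      (mem_maximalIdeal_of_eq_ofList h.1 x List.mem_cons_self)
    refine .cons (fun _ _ => mul_left_cancel₀ h.head_ne_zero) ?_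
    have hquot := (isWeaklyRegular_map_algebraMap_iff (R ⧸ Ideal.span {x})
      (R ⧸ Ideal.span {x}) l).1 h.quotient.isWeaklyRegular
    refine ((Submodule.quotEquivOfEq _ _ ?_).isWeaklyRegular_congr l).1 hquot
    simp [← Submodule.ideal_span_singleton_smul]
termination_by l => l.length

theorem free_of_isWeaklyRegular {R : Type u} [CommRing R] [IsLocalRing R] [IsNoetherianRing R]
    {M : Type v} [AddCommGroup M] [Module R M] [Module.Finite R M] :
    ∀ {l : List R}, maximalIdeal R = Ideal.ofList l → IsWeaklyRegular M l → Module.Free R M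
  | [], hmax, _ => by
    let := (isField_iff_maximalIdeal_eq.2 (hmax.trans Ideal.ofList_nil)).toField
    exact Module.Free.of_divisionRing R M
  | x :: l, hmax, hreg => by
    have hx := mem_maximalIdeal_of_eq_ofList hmax x List.mem_cons_self
    have := isLocalRing_quotient_span_singleton hx
    have := Module.finitePresentation_of_finite R M
    have := Module.Finite.of_restrictScalars_finite R (R ⧸ Ideal.span {x}) (QuotSMulTop x M)
    rw [isWeaklyRegular_cons_iff'] at hreg
    exact (Module.free_quotSMulTop_iff_free R M (maximalIdeal_le_jacobson _ hx) hreg.1).1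
      (free_of_isWeaklyRegular (maximalIdeal_quotient_eq_ofList hmax) hreg.2)
termination_by l => l.length

/-! ### Powers of regular sequences and socles -/

lemma map_induction_of_perm {α : Type*} {P : List α → Prop} {f : α → α}
    (perm : ∀ {l l'}, l.Perm l' → P l → P l') (step : ∀ {x l}, P (x :: l) → P (f x :: l))
    {l : List α} (h : P l) : P (l.map f) := by
  suffices key : ∀ l l', P (l' ++ l) → P (l' ++ l.map f) from key l [] h
  intro l
  induction l with
  | nil => simp
  | cons x l ih =>
    intro l' h
    have hfx : P (l' ++ f x :: l) := perm List.perm_middle.symm (step (perm List.perm_middle h))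
    simpa using ih (l' ++ [f x]) (by simpa using hfx)

section RegularSequence

variable {R : Type*} [CommRing R] [IsLocalRing R]

lemma isWeaklyRegular_cons_iff_of_subset_maximalIdeal {M : Type*} [AddCommGroup M] [Module R M]
    [IsNoetherian R M] {x : R} {l : List R} (h : ∀ r ∈ x :: l, r ∈ maximalIdeal R) :
    IsWeaklyRegular M (x :: l) ↔
      IsWeaklyRegular M l ∧ IsSMulRegular (M ⧸ (Ideal.ofList l • ⊤ : Submodule R M)) x := by
  have hperm : (x :: l).Perm (l ++ [x]) := (List.perm_append_singleton x l).symm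
  rw [← isWeaklyRegular_singleton_iff, ← isWeaklyRegular_append_iff]
  exact ⟨fun hreg => isWeaklyRegular_of_perm_of_subset_maximalIdeal hreg hperm h,
    fun hreg => isWeaklyRegular_of_perm_of_subset_maximalIdeal hreg hperm.symm
      fun r hr => h r (hperm.mem_iff.2 hr)⟩

lemma forall_mem_pow_cons_mem_maximalIdeal {x : R} {l : List R} {k : ℕ} (hk : k ≠ 0)
    (h : ∀ r ∈ x :: l, r ∈ maximalIdeal R) : ∀ r ∈ x ^ k :: l, r ∈ maximalIdeal R := by
  rw [List.forall_mem_cons] at h ⊢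
  exact ⟨Ideal.pow_mem_of_mem _ h.1 _ (Nat.pos_of_ne_zero hk), h.2⟩

lemma isWeaklyRegular_pow_cons {M : Type*} [AddCommGroup M] [Module R M] [IsNoetherian R M]
    {x : R} {l : List R} {k : ℕ} (hk : k ≠ 0) (h : ∀ r ∈ x :: l, r ∈ maximalIdeal R)
    (hreg : IsWeaklyRegular M (x :: l)) : IsWeaklyRegular M (x ^ k :: l) := by
  rw [isWeaklyRegular_cons_iff_of_subset_maximalIdeal h] at hreg
  rw [isWeaklyRegular_cons_iff_of_subset_maximalIdeal (forall_mem_pow_cons_mem_maximalIdeal hk h)]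
  exact ⟨hreg.1, hreg.2.pow k⟩

theorem isWeaklyRegular_map_pow {M : Type*} [AddCommGroup M] [Module R M] [IsNoetherian R M]
    {l : List R} {k : ℕ} (hk : k ≠ 0) (h : ∀ r ∈ l, r ∈ maximalIdeal R)
    (hreg : IsWeaklyRegular M l) : IsWeaklyRegular M (l.map (· ^ k)) :=
  (map_induction_of_perm
    (P := fun l => (∀ r ∈ l, r ∈ maximalIdeal R) ∧ IsWeaklyRegular M l)
    (fun hperm ⟨h, hreg⟩ => ⟨fun r hr => h r (hperm.mem_iff.2 hr),
      isWeaklyRegular_of_perm_of_subset_maximalIdeal hreg hperm h⟩)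
    (fun ⟨h, hreg⟩ => ⟨forall_mem_pow_cons_mem_maximalIdeal hk h,
      isWeaklyRegular_pow_cons hk h hreg⟩)
    ⟨h, hreg⟩).2

end RegularSequence

section Socle

variable {R : Type*} [CommRing R]

/-- `R ⧸ Q` has a simple essential socle: among the ideals strictly containing `Q` there is a least
one, here given as `(u) + Q`. If `R ⧸ Q` is Artinian local, this says that it is Gorenstein. -/
def HasSimpleEssentialSocle (Q : Ideal R) : Prop :=
  ∃ u ∉ Q, ∀ y ∉ Q, u ∈ Ideal.span {y} ⊔ Q

lemma HasSimpleEssentialSocle.map_ringEquiv {T : Type*} [CommRing T] {Q : Ideal R}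
    (h : HasSimpleEssentialSocle Q) (e : R ≃+* T) : HasSimpleEssentialSocle (Q.map e) := by
  obtain ⟨u, hu, hspan⟩ := h
  have mem_map (x : R) : e x ∈ Q.map e ↔ x ∈ Q := by
    simp [← Ideal.comap_symm]
  refine ⟨e u, (mem_map u).not.2 hu, e.surjective.forall.2 fun y hy => ?_⟩
  have := Ideal.mem_map_of_mem e (hspan y ((mem_map y).not.1 hy))
  rwa [Ideal.map_sup, Ideal.map_span, Set.image_singleton] at this

lemma hasSimpleEssentialSocle_of_isMaximal (Q : Ideal R) [hQ : Q.IsMaximal] :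
    HasSimpleEssentialSocle Q := by
  refine ⟨1, (Ideal.ne_top_iff_one Q).1 hQ.ne_top, fun y hy => ?_⟩
  obtain ⟨a, q, hq, h⟩ := hQ.exists_inv hy
  exact Ideal.mem_span_singleton_sup.2 ⟨a, q, hq, h⟩

lemma pow_mul_mem_span_singleton_sup {K : Ideal R} {x u : R}
    (h : ∀ y ∉ Ideal.span {x} ⊔ K, u ∈ Ideal.span {y} ⊔ (Ideal.span {x} ⊔ K)) (n : ℕ) :
    ∀ y ∉ Ideal.span {x ^ (n + 1)} ⊔ K,
      x ^ n * u ∈ Ideal.span {y} ⊔ (Ideal.span {x ^ (n + 1)} ⊔ K) := by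
  simp only [Ideal.mem_span_singleton_sup] at h ⊢
  induction n with
  | zero => simpa using h
  | succ n ih =>
    intro y hy
    by_cases hyn : ∃ a, ∃ b ∈ K, a * x ^ (n + 1) + b = y
    · obtain ⟨t, κ, hκ, rfl⟩ := hyn
      have ht : ¬∃ a, ∃ b ∈ K, a * x + b = t := by
        rintro ⟨a, κ', hκ', rfl⟩
        exact hy ⟨a, κ' * x ^ (n + 1) + κ, add_mem (K.mul_mem_right _ hκ') hκ, by ring⟩
      obtain ⟨z, _, ⟨a, κ', hκ', rfl⟩, hz⟩ := h t ht
      exact ⟨z, _, ⟨a, x ^ (n + 1) * κ' - z * κ,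
        sub_mem (K.mul_mem_left _ hκ') (K.mul_mem_left _ hκ), rfl⟩,
        by linear_combination x ^ (n + 1) * hz⟩
    · obtain ⟨z, _, ⟨a, κ, hκ, rfl⟩, hz⟩ := ih y hyn
      exact ⟨x * z, _, ⟨a, x * κ, K.mul_mem_left _ hκ, rfl⟩, by linear_combination x * hz⟩

lemma HasSimpleEssentialSocle.span_pow_sup {K : Ideal R} {x : R}
    (hx : IsSMulRegular (R ⧸ K) x) {k : ℕ} (hk : k ≠ 0)
    (h : HasSimpleEssentialSocle (Ideal.span {x} ⊔ K)) :
    HasSimpleEssentialSocle (Ideal.span {x ^ k} ⊔ K) := by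
  obtain ⟨u, hu, hspan⟩ := h
  obtain ⟨n, rfl⟩ := Nat.exists_eq_add_one_of_ne_zero hk
  refine ⟨x ^ n * u, fun hmem => hu ?_, pow_mul_mem_span_singleton_sup hspan n⟩
  obtain ⟨a, κ, hκ, h⟩ := Ideal.mem_span_singleton_sup.1 hmem
  refine Ideal.mem_span_singleton_sup.2
    ⟨a, u - a * x, mem_of_isSMulRegular_quotient_of_smul_mem (hx.pow n) ?_, by ring⟩
  rwa [smul_eq_mul, show x ^ n * (u - a * x) = κ by linear_combination -h]

theorem HasSimpleEssentialSocle.ofList_map_pow [IsLocalRing R] [IsNoetherianRing R]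
    {l : List R} {k : ℕ} (hk : k ≠ 0) (hmem : ∀ r ∈ l, r ∈ maximalIdeal R)
    (hreg : IsWeaklyRegular R l) (h : HasSimpleEssentialSocle (Ideal.ofList l)) :
    HasSimpleEssentialSocle (Ideal.ofList (l.map (· ^ k))) := by
  refine (map_induction_of_perm (P := fun l => (∀ r ∈ l, r ∈ maximalIdeal R) ∧
    IsWeaklyRegular R l ∧ HasSimpleEssentialSocle (Ideal.ofList l)) ?_ ?_ ⟨hmem, hreg, h⟩).2.2
  · rintro l l' hperm ⟨hmem, hreg, h⟩
    refine ⟨fun r hr => hmem r (hperm.mem_iff.2 hr),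
      isWeaklyRegular_of_perm_of_subset_maximalIdeal hreg hperm hmem, ?_⟩
    simpa only [Ideal.ofList, hperm.mem_iff] using h
  · rintro x l ⟨hmem, hreg, h⟩
    refine ⟨forall_mem_pow_cons_mem_maximalIdeal hk hmem, isWeaklyRegular_pow_cons hk hmem hreg, ?_⟩
    have hx := ((isWeaklyRegular_cons_iff_of_subset_maximalIdeal hmem).1 hreg).2
    rw [smul_eq_mul, Ideal.mul_top] at hx
    rw [Ideal.ofList_cons] at h ⊢
    exact h.span_pow_sup hx hk

end Socle

/-! ### Linear forms on a finite free algebra -/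

section LinearForms

variable {S T : Type*} [CommRing S] [CommRing T] [Algebra S T]

lemma apply_mem_of_mem_map_algebraMap {J : Ideal S} {y : T} (hy : y ∈ J.map (algebraMap S T))
    (ψ : T →ₗ[S] S) : ψ y ∈ J := by
  rw [← Submodule.restrictScalars_mem S, ← Ideal.smul_top_eq_map] at hy
  simpa using Submodule.smul_top_le_comap_smul_top J ψ hy

lemma mem_map_algebraMap_iff_forall_linearMap [Module.Free S T] {J : Ideal S} {y : T} :
    y ∈ J.map (algebraMap S T) ↔ ∀ ψ : T →ₗ[S] S, ψ y ∈ J := by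
  refine ⟨apply_mem_of_mem_map_algebraMap, fun h => ?_⟩
  let b := Module.Free.chooseBasis S T
  rw [← b.linearCombination_repr y, Finsupp.linearCombination_apply]
  refine Ideal.sum_mem _ fun i _ => ?_
  simp only [Algebra.smul_def]
  exact Ideal.mul_mem_right _ _ (Ideal.mem_map_of_mem _ (h (b.coord i)))

lemma apply_mul_mem_of_forall_basis {ι : Type*} (b : Module.Basis ι S T)
    {Φ : T →ₗ[S] S} {J : Ideal S} {y : T} (h : ∀ i, Φ (b i * y) ∈ J) (z : T) :
    Φ (z * y) ∈ J := by
  rw [← b.linearCombination_repr z, Finsupp.linearCombination_apply, Finsupp.sum, Finset.sum_mul,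
    map_sum]
  refine Ideal.sum_mem _ fun i _ => ?_
  rw [smul_mul_assoc, map_smul]
  exact Ideal.mul_mem_left _ _ (h i)

variable [IsLocalRing S]

lemma isUnit_det_of_forall_mulVec_mem {ι : Type*} [Fintype ι] [DecidableEq ι] {G : Matrix ι ι S}
    (h : ∀ v : ι → S, (∀ i, G.mulVec v i ∈ maximalIdeal S) → ∀ i, v i ∈ maximalIdeal S) :
    IsUnit G.det := by
  by_contra hG
  have hdet : (G.map (residue S)).det = 0 := by
    rwa [← RingHom.mapMatrix_apply, ← RingHom.map_det, residue_eq_zero_iff, mem_maximalIdeal]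
  obtain ⟨v, hv, hGv⟩ := Matrix.exists_mulVec_eq_zero_iff.2 hdet
  obtain ⟨w, rfl⟩ := (residue_surjective (R := S)).comp_left v
  refine hv (funext fun i => (residue_eq_zero_iff _).2 (h w (fun j => ?_) i))
  rw [← residue_eq_zero_iff, RingHom.map_mulVec]
  exact congrFun hGv j

theorem exists_linearMap_forall_eq_comp_mulLeft [Module.Free S T] [Module.Finite S T]
    (h : HasSimpleEssentialSocle ((maximalIdeal S).map (algebraMap S T))) :
    ∃ Φ : T →ₗ[S] S, ∀ ψ : T →ₗ[S] S, ∃ c, ψ = Φ ∘ₗ LinearMap.mulLeft S c := by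
  classical
  obtain ⟨u, hu, hspan⟩ := h
  obtain ⟨Φ, hΦ⟩ : ∃ Φ : T →ₗ[S] S, Φ u ∉ maximalIdeal S := by
    simpa [mem_map_algebraMap_iff_forall_linearMap] using hu
  have mem_of_forall_mul (y : T) (hy : ∀ z, Φ (z * y) ∈ maximalIdeal S) :
      y ∈ (maximalIdeal S).map (algebraMap S T) := by
    by_contra hy'
    obtain ⟨z, t, ht, rfl⟩ := Ideal.mem_span_singleton_sup.1 (hspan y hy')
    rw [map_add] at hΦ
    exact hΦ (add_mem (hy z) (apply_mem_of_mem_map_algebraMap ht Φ))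
  -- `Φ` does not vanish on the socle of the fibre `T ⧸ 𝔫T`, hence `(x, y) ↦ Φ (x * y)` is perfect.
  let b := Module.Free.chooseBasis S T
  let G : Matrix _ _ S := .of fun i j => Φ (b i * b j)
  have G_mulVec (v) (i) : G.mulVec v i = Φ (b i * ∑ j, v j • b j) := by
    simp [G, Matrix.mulVec, dotProduct, Finset.mul_sum, mul_comm]
  have hG : IsUnit G.det := isUnit_det_of_forall_mulVec_mem fun v hv i => by
    have := apply_mem_of_mem_map_algebraMap (mem_of_forall_mul (∑ j, v j • b j)
      (apply_mul_mem_of_forall_basis b fun i => G_mulVec v i ▸ hv i)) (b.coord i)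
    simpa [Finsupp.single_apply] using this
  refine ⟨Φ, fun ψ => ?_⟩
  let v := G⁻¹.mulVec fun i => ψ (b i)
  have hv : G.mulVec v = fun i => ψ (b i) := by
    rw [Matrix.mulVec_mulVec, Matrix.mul_nonsing_inv _ hG, Matrix.one_mulVec]
  refine ⟨∑ j, v j • b j, b.ext fun i => ?_⟩
  rw [← congrFun hv i, G_mulVec, LinearMap.comp_apply, LinearMap.mulLeft_apply, mul_comm]

theorem exists_linearMap_isUnit_iff_not_colon_le [Module.Free S T] [Module.Finite S T]
    (h : HasSimpleEssentialSocle ((maximalIdeal S).map (algebraMap S T)))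
    (I : Ideal S) (J : Ideal T) :
    (∃ ψ : T →ₗ[S] S, (∀ y ∈ J, ψ y ∈ I) ∧ IsUnit (ψ 1)) ↔
      ¬ (I.map (algebraMap S T)).colon J ≤ (maximalIdeal S).map (algebraMap S T) := by
  rw [SetLike.not_le_iff_exists]
  constructor
  · rintro ⟨ψ, hψI, hψ1⟩
    obtain ⟨Φ, hΦ⟩ := exists_linearMap_forall_eq_comp_mulLeft h
    obtain ⟨c, rfl⟩ := hΦ ψ
    refine ⟨c, Submodule.mem_colon.2 fun y hy => ?_, fun hc => ?_⟩
    · refine mem_map_algebraMap_iff_forall_linearMap.2 fun θ => ?_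
      obtain ⟨d, rfl⟩ := hΦ θ
      simpa [mul_left_comm] using hψI (d * y) (J.mul_mem_left d hy)
    · exact (mem_maximalIdeal _).1 (apply_mem_of_mem_map_algebraMap hc Φ) (by simpa using hψ1)
  · rintro ⟨c, hcJ, hc⟩
    obtain ⟨θ, hθ⟩ : ∃ θ : T →ₗ[S] S, θ c ∉ maximalIdeal S := by
      simpa [mem_map_algebraMap_iff_forall_linearMap] using hc
    refine ⟨θ ∘ₗ LinearMap.mulLeft S c, fun y hy => ?_, by simpa using hθ⟩
    exact apply_mem_of_mem_map_algebraMap (Submodule.mem_colon.1 hcJ y hy) θ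

end LinearForms

/-! ### The Frobenius pushforward -/

/-- The `S`-algebra `F_* S`: the ring `S` itself, on which `S` acts through the Frobenius map. It is
a type synonym, so that this action does not clash with multiplication in `S`. -/
def FrobeniusPushforward (S : Type*) (_p : ℕ) : Type _ := S

namespace FrobeniusPushforward

variable (S : Type*) [CommRing S] (p : ℕ)

instance : CommRing (FrobeniusPushforward S p) := inferInstanceAs (CommRing S)

/-- The identity map `S → F_* S`, which is a ring isomorphism but not `S`-linear. -/
def of : S ≃+* FrobeniusPushforward S p := RingEquiv.refl S

variable [Fact p.Prime] [CharP S p]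

noncomputable instance : Algebra S (FrobeniusPushforward S p) :=
  ((of S p).toRingHom.comp (frobenius S p)).toAlgebra

variable {S p}

lemma smul_of (r x : S) : r • of S p x = of S p (r ^ p * x) :=
  (map_mul (of S p) _ _).symm

lemma map_algebraMap_eq (J : Ideal S) :
    J.map (algebraMap S (FrobeniusPushforward S p)) = (J.bracketPow p).map (of S p) := by
  rw [Ideal.bracketPow, Ideal.map_span, Ideal.map, Set.image_image]
  rfl

lemma of_mem_map_algebraMap {J : Ideal S} {x : S} :
    of S p x ∈ J.map (algebraMap S (FrobeniusPushforward S p)) ↔ x ∈ J.bracketPow p := by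
  rw [map_algebraMap_eq, ← Ideal.comap_symm, Ideal.mem_comap, RingEquiv.symm_apply_apply]

lemma finite_of_fFinite (h : FFinite S p) : Module.Finite S (FrobeniusPushforward S p) := by
  classical
  obtain ⟨s, hs⟩ := h
  refine ⟨⟨s.image (of S p), top_le_iff.1 fun y _ => ?_⟩⟩
  obtain ⟨x, rfl⟩ := (of S p).surjective y
  obtain ⟨a, rfl⟩ := hs x
  rw [map_sum]
  refine Submodule.sum_mem _ fun b hb => ?_
  rw [← smul_of]
  exact Submodule.smul_mem _ _ (Submodule.subset_span (by simpa using hb))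

lemma isWeaklyRegular_iff {l : List S} :
    IsWeaklyRegular (FrobeniusPushforward S p) l ↔ IsWeaklyRegular S (l.map (· ^ p)) :=
  AddEquiv.isWeaklyRegular_congr (e := (of S p).symm.toAddEquiv) <| by
    simp [List.forall₂_map_right_iff, List.forall₂_same, (of S p).surjective.forall, smul_of]

theorem free_of_isRegularSystemOfParameters [IsLocalRing S] [IsNoetherianRing S] {l : List S}
    (h : IsRegularSystemOfParameters l) (hFF : FFinite S p) :
    Module.Free S (FrobeniusPushforward S p) := by
  have := finite_of_fFinite hFF
  exact free_of_isWeaklyRegular h.1 (isWeaklyRegular_iff.2 (isWeaklyRegular_map_pow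
    (Fact.out : p.Prime).ne_zero (mem_maximalIdeal_of_eq_ofList h.1) h.isWeaklyRegular))

theorem hasSimpleEssentialSocle_map_maximalIdeal [IsLocalRing S] [IsNoetherianRing S]
    {l : List S} (h : IsRegularSystemOfParameters l) : HasSimpleEssentialSocle
      ((maximalIdeal S).map (algebraMap S (FrobeniusPushforward S p))) := by
  have hpow : (maximalIdeal S).bracketPow p = Ideal.ofList (l.map (· ^ p)) := by
    rw [h.1]
    exact Ideal.map_ofList (frobenius S p) l
  rw [map_algebraMap_eq, hpow]
  refine .map_ringEquiv (.ofList_map_pow (Fact.out : p.Prime).ne_zero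
    (mem_maximalIdeal_of_eq_ofList h.1) h.isWeaklyRegular ?_) _
  rw [← h.1]
  exact hasSimpleEssentialSocle_of_isMaximal _

end FrobeniusPushforward

open FrobeniusPushforward

section FPure

variable {S : Type*} [CommRing S] {p : ℕ} [Fact p.Prime] [CharP S p] {I : Ideal S}

lemma FPure.quotient_of_linearMap (ψ : FrobeniusPushforward S p →ₗ[S] S)
    (hψ : ∀ x ∈ I, ψ (of S p x) ∈ I) (hψ1 : IsUnit (ψ 1)) : FPure (S ⧸ I) p := by
  obtain ⟨v, hv⟩ := hψ1
  let φ : S ⧸ I →+ S ⧸ I := QuotientAddGroup.map _ _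
    ((v⁻¹ • ψ).toAddMonoidHom.comp (of S p).toAddEquiv.toAddMonoidHom)
    fun x hx => I.mul_mem_left _ (hψ x hx)
  have hφ (x : S) : φ (Ideal.Quotient.mk I x) = Ideal.Quotient.mk I (↑v⁻¹ * ψ (of S p x)) := rfl
  refine ⟨φ, Ideal.Quotient.mk_surjective.forall₂.2 fun r x => ?_, ?_⟩
  · rw [← map_pow, ← map_mul, hφ, hφ, ← map_mul, ← smul_of, map_smul, smul_eq_mul, mul_left_comm]
  · rw [← map_one (Ideal.Quotient.mk I), hφ, map_one, ← hv, Units.inv_mul]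

lemma FPure.exists_linearMap [Module.Projective S (FrobeniusPushforward S p)]
    (h : FPure (S ⧸ I) p) : ∃ ψ : FrobeniusPushforward S p →ₗ[S] S,
      (∀ x ∈ I, ψ (of S p x) ∈ I) ∧ 1 - ψ 1 ∈ I := by
  obtain ⟨φ, hφ, hφ1⟩ := h
  let θ : FrobeniusPushforward S p →ₗ[S] S ⧸ I :=
    { toFun x := φ (Ideal.Quotient.mk I ((of S p).symm x))
      map_add' x y := by simp
      map_smul' r := (of S p).surjective.forall.2 fun x => by
        rw [smul_of, RingEquiv.symm_apply_apply, map_mul, map_pow, hφ]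
        rfl }
  obtain ⟨ψ, hψ⟩ := Module.projective_lifting_property I.mkQ θ I.mkQ_surjective
  have mk_ψ (x : S) : Ideal.Quotient.mk I (ψ (of S p x)) = φ (Ideal.Quotient.mk I x) :=
    LinearMap.congr_fun hψ (of S p x)
  refine ⟨ψ, fun x hx => ?_, ?_⟩
  · rw [← Ideal.Quotient.eq_zero_iff_mem, mk_ψ, Ideal.Quotient.eq_zero_iff_mem.2 hx, map_zero]
  · rw [← Ideal.Quotient.eq_zero_iff_mem, map_sub, ← map_one (of S p), mk_ψ, map_one, hφ1,
      sub_self]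

variable [IsLocalRing S]

lemma exists_linearMap_isUnit_apply_one [Module.Free S (FrobeniusPushforward S p)] :
    ∃ ψ : FrobeniusPushforward S p →ₗ[S] S, IsUnit (ψ 1) := by
  have hle : (maximalIdeal S).bracketPow p ≤ maximalIdeal S := Ideal.span_le.2 <| by
    rintro _ ⟨a, ha, rfl⟩
    exact Ideal.pow_mem_of_mem _ ha _ (Fact.out : p.Prime).pos
  have hone : of S p 1 ∉ (maximalIdeal S).map (algebraMap S (FrobeniusPushforward S p)) := fun h =>
    (Ideal.ne_top_iff_one _).1 Ideal.IsPrime.ne_top' (hle (of_mem_map_algebraMap.1 h))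
  simpa [mem_map_algebraMap_iff_forall_linearMap] using hone

theorem fPure_quotient_iff_exists_linearMap [Module.Free S (FrobeniusPushforward S p)] :
    FPure (S ⧸ I) p ↔ ∃ ψ : FrobeniusPushforward S p →ₗ[S] S,
      (∀ x ∈ I, ψ (of S p x) ∈ I) ∧ IsUnit (ψ 1) := by
  refine ⟨fun h => ?_, fun ⟨ψ, hψ, hψ1⟩ => .quotient_of_linearMap ψ hψ hψ1⟩
  by_cases hI : I = ⊤
  · obtain ⟨ψ, hψ1⟩ := exists_linearMap_isUnit_apply_one (S := S) (p := p)
    exact ⟨ψ, by simp [hI], hψ1⟩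
  · obtain ⟨ψ, hψ, hψ1⟩ := h.exists_linearMap
    exact ⟨ψ, hψ, isUnit_of_mem_nonunits_one_sub_self _ (le_maximalIdeal hI hψ1)⟩

end FPure

theorem fedder_criterion_general (S : Type*) [CommRing S] [IsLocalRing S]
    (p : ℕ) [Fact p.Prime] [CharP S p]
    (hreg : IsRegularLocal S) (hFF : FFinite S p) (I : Ideal S) :
    FPure (S ⧸ I) p ↔
      ¬ (Submodule.colon (I.bracketPow p) I ≤
          (IsLocalRing.maximalIdeal S).bracketPow p) := by
  have : IsNoetherianRing S := hreg.1
  obtain ⟨l, hl⟩ := hreg.exists_isRegularSystemOfParameters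
  have := finite_of_fFinite hFF
  have := free_of_isRegularSystemOfParameters hl hFF
  have hcolon := exists_linearMap_isUnit_iff_not_colon_le
    (hasSimpleEssentialSocle_map_maximalIdeal (p := p) hl) I (I.comap (of S p).symm)
  rw [fPure_quotient_iff_exists_linearMap]
  simpa [SetLike.le_def, Submodule.mem_colon, (of S p).surjective.forall, ← map_mul,
    of_mem_map_algebraMap] using hcolon

end

/-- **Fedder's criterion.** Let `(S, 𝔫)` be an F-finite regular local ring of
characteristic `p`, `I` a radical ideal and `R = S/I`. Then `R` is F-pure if and only if
`(I^{[p]} : I) ⊄ 𝔫^{[p]}`. -/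
theorem fedder_criterion (S : Type*) [CommRing S] [IsLocalRing S] [IsNoetherianRing S]
    (p : ℕ) [Fact p.Prime] [CharP S p]
    (hreg : IsRegularLocal S) (hFF : FFinite S p)
    (I : Ideal S) (hrad : I.IsRadical) :
    FPure (S ⧸ I) p ↔
      ¬ (Submodule.colon (I.bracketPow p) I ≤
          (IsLocalRing.maximalIdeal S).bracketPow p) :=
  fedder_criterion_general S p hreg hFF I
end
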